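/- Let Q be a poset of dimension at most 1 and of finite type. Then every closed full subposet inclusion D ⊆ Q admits a transfer, i.e., the monotone extension (D_*) → (Q_*) to posets with a bottom element adjoined has a right adjoint. -/

import Mathlib

universe u

/-- A poset has dimension at most 1 if whenever `w ≤ u ≤ x` and `w ≤ v ≤ x`, the elements
`u` and `v` are comparable. -/
def PosetDimLE1 (Q : Type u) [Preorder Q] : Prop :=
  ∀ ⦃w u v x : Q⦄, w ≤ u → u ≤ x → w ≤ v → v ≤ x → u ≤ v ∨ v ≤ u

/-- `suplim U` is the set of minimal elements of the set of upper bounds of `U`. -/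
def suplim {Q : Type u} [Preorder Q] (U : Set Q) : Set Q :=
  {s | Minimal (· ∈ upperBounds U) s}

/-- A subset `D` of a poset is closed if `suplim U ⊆ D` for every nonempty subset `U ⊆ D`. -/
def IsClosedSubposet {Q : Type u} [Preorder Q] (D : Set Q) : Prop :=
  ∀ U : Set Q, U ⊆ D → U.Nonempty → suplim U ⊆ D

/-- A monotone map `α : D → Q` admits a transfer if the extension
`α⁎ : D ∪ {-∞} → Q ∪ {-∞}` (sending `-∞` to `-∞`) has a right adjoint. -/
def AdmitsTransfer {D : Type u} {Q : Type u} [Preorder D] [Preorder Q] (α : D → Q) : Prop :=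
  ∃ r : WithBot Q → WithBot D, GaloisConnection (WithBot.map α) r

/-!
Finite down-sets make `Q` well-founded. For `q : Q`, the element `q` is itself an upper
bound of `D ∩ Set.Iic q`, so some minimal upper bound `s` of this set satisfies `s ≤ q`. If
the set is nonempty, closedness puts `s` in `D`, so `s` is the greatest element of `D` below `q`,
and the right adjoint sends `q` to `s`. If the set is empty, it sends `q` to `⊥`.
-/

open Set

theorem wellFoundedLT_of_finite_Iio {Q : Type*} [Preorder Q] (hfin : ∀ x : Q, (Iio x).Finite) :
    WellFoundedLT Q where
  wf := ⟨fun x ↦ (WellFoundedOn.acc_iff_wellFoundedOn.out 0 2).2 <| by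
    simpa only [Relation.transGen_eq_self, Iio_def] using (hfin x).wellFoundedOn⟩

section Transfer

variable {D Q : Type u} [Preorder D] [Preorder Q] {α : D → Q}

theorem admitsTransfer_of_exists_isGreatest (hα : Monotone α)
    (hgreatest : ∀ q, (α ⁻¹' Iic q).Nonempty → ∃ d, IsGreatest (α ⁻¹' Iic q) d) :
    AdmitsTransfer α := by
  have exists_adjoint_value (q : WithBot Q) :
      ∃ r : WithBot D, ∀ d, WithBot.map α d ≤ q ↔ d ≤ r := by
    induction q with
    | bot => exact ⟨⊥, fun d ↦ by cases d <;> simp⟩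
    | coe q =>
      rcases (α ⁻¹' Iic q).eq_empty_or_nonempty with hempty | hne
      · have not_map_le (d : D) : ¬α d ≤ q := eq_empty_iff_forall_notMem.1 hempty d
        exact ⟨⊥, fun d ↦ by cases d <;> simp [not_map_le]⟩
      · obtain ⟨r, hrq, hr⟩ := hgreatest q hne
        have map_le_iff (d : D) : α d ≤ q ↔ d ≤ r := ⟨fun hd ↦ hr hd, fun hd ↦ (hα hd).trans hrq⟩
        exact ⟨r, fun d ↦ by cases d <;> simp [map_le_iff]⟩
  choose r hr using exists_adjoint_value
  exact ⟨r, fun d q ↦ hr q d⟩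

end Transfer

section Closed

variable {Q : Type u} [Preorder Q] [WellFoundedLT Q] {D : Set Q}

theorem exists_mem_suplim_le {U : Set Q} {q : Q} (hq : q ∈ upperBounds U) :
    ∃ s ∈ suplim U, s ≤ q := by
  obtain ⟨s, hsq, hs⟩ := exists_minimal_le_of_wellFoundedLT (· ∈ upperBounds U) q hq
  exact ⟨s, hs, hsq⟩

theorem IsClosedSubposet.exists_isGreatest_inter_Iic (hD : IsClosedSubposet D) {q : Q}
    (hne : (D ∩ Iic q).Nonempty) : ∃ s, IsGreatest (D ∩ Iic q) s := by
  obtain ⟨s, hs, hsq⟩ := exists_mem_suplim_le (U := D ∩ Iic q) fun _ hx ↦ hx.2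
  have hsD : s ∈ D := hD _ inter_subset_left hne hs
  exact ⟨s, ⟨hsD, hsq⟩, hs.prop⟩

theorem admitsTransfer_of_closed_of_finiteType_general (hD : IsClosedSubposet D) :
    AdmitsTransfer (Subtype.val : D → Q) := by
  refine admitsTransfer_of_exists_isGreatest (Subtype.mono_coe D) fun q ⟨d, hdq⟩ ↦ ?_
  obtain ⟨s, ⟨hsD, hsq⟩, hs⟩ := hD.exists_isGreatest_inter_Iic ⟨d, d.2, hdq⟩
  exact ⟨⟨s, hsD⟩, hsq, fun e he ↦ hs ⟨e.2, he⟩⟩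

end Closed

/-- **Statement 17.** Let `Q` be a poset of dimension at most 1 and of finite type
(all down-sets `{q | q ≤ x}` are finite). Then every closed full subposet inclusion
`D ⊆ Q` admits a transfer. -/
theorem admitsTransfer_of_closed_of_finiteType {Q : Type u} [PartialOrder Q]
    (hdim : PosetDimLE1 Q) (hft : ∀ x : Q, {q : Q | q ≤ x}.Finite)
    (D : Set Q) (hD : IsClosedSubposet D) :
    AdmitsTransfer ((Subtype.val) : D → Q) := by
  have : WellFoundedLT Q :=
    wellFoundedLT_of_finite_Iio fun x ↦ (hft x).subset Iio_subset_Iic_self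
  exact admitsTransfer_of_closed_of_finiteType_general hD
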